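/- There is no cuspidal S_1^- singularity on any minface: if f is a minface on an open set U ⊆ R^2 with real Weierstrass data (g1, g2, ω1 du, ω2 dv), then for every point p ∈ U the germ of f at p is not A-equivalent to the cuspidal S_1^- singularity f_{CS1-}(u,v) = (u, v^2, v^3(u^2 - v^2)) at the origin. -/

import Mathlib

noncomputable section

open Real Filter

abbrev R2 : Type := ℝ × ℝ
abbrev R3 : Type := ℝ × ℝ × ℝ

/-- The partial derivative in the `u`-direction. -/
def pu (f : R2 → R3) (p : R2) : R3 := fderiv ℝ f p (1, 0)
/-- The partial derivative in the `v`-direction. -/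
def pv (f : R2 → R3) (p : R2) : R3 := fderiv ℝ f p (0, 1)

/-- Determinant of three column vectors in ℝ³. -/
def det3 (a b c : R3) : ℝ :=
  a.1 * (b.2.1 * c.2.2 - b.2.2 * c.2.1)
  - b.1 * (a.2.1 * c.2.2 - a.2.2 * c.2.1)
  + c.1 * (a.2.1 * b.2.2 - a.2.2 * b.2.1)

/-- Determinant of two vectors in ℝ². -/
def det2 (a b : R2) : ℝ := a.1 * b.2 - a.2 * b.1

/-- Euclidean inner product on ℝ³. -/
def ip3 (a b : R3) : ℝ := a.1 * b.1 + a.2.1 * b.2.1 + a.2.2 * b.2.2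

/-- `f : ℝ² → ℝ³ = 𝕃³` is the generalized timelike minimal surface with real Weierstrass
data `(g1, g2, w1 du, w2 dv)`: it is smooth, its partial derivatives are
`f_u = (ω1/2)·(-1-g1², 1-g1², 2g1)` and `f_v = (ω2/2)·(1+g2², 1-g2², -2g2)`
(which encodes the Weierstrass-type integral representation), and it is an immersion
on an open dense set. -/
structure IsGTMS (f : R2 → R3) (g1 g2 w1 w2 : ℝ → ℝ) : Prop where
  smooth_f : ContDiff ℝ (⊤ : ℕ∞) f
  smooth_g1 : ContDiff ℝ (⊤ : ℕ∞) g1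
  smooth_g2 : ContDiff ℝ (⊤ : ℕ∞) g2
  smooth_w1 : ContDiff ℝ (⊤ : ℕ∞) w1
  smooth_w2 : ContDiff ℝ (⊤ : ℕ∞) w2
  deriv_u : ∀ p : R2, pu f p =
    ((-1 - g1 p.1 ^ 2) * w1 p.1 / 2, (1 - g1 p.1 ^ 2) * w1 p.1 / 2, g1 p.1 * w1 p.1)
  deriv_v : ∀ p : R2, pv f p =
    ((1 + g2 p.2 ^ 2) * w2 p.2 / 2, (1 - g2 p.2 ^ 2) * w2 p.2 / 2, -(g2 p.2 * w2 p.2))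
  dense_immersion : Dense {p : R2 | Function.Injective (fderiv ℝ f p)}

/-- `Φ` is a germ of diffeomorphism at `p`. -/
def IsLocalDiffeoAt {E F : Type*} [NormedAddCommGroup E] [NormedSpace ℝ E]
    [NormedAddCommGroup F] [NormedSpace ℝ F] (Φ : E → F) (p : E) : Prop :=
  ∃ (U : Set E) (V : Set F) (Φinv : F → E),
    IsOpen U ∧ p ∈ U ∧ IsOpen V ∧ Φ p ∈ V ∧
    ContDiffOn ℝ (⊤ : ℕ∞) Φ U ∧ ContDiffOn ℝ (⊤ : ℕ∞) Φinv V ∧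
    Set.MapsTo Φ U V ∧ Set.MapsTo Φinv V U ∧
    (∀ x ∈ U, Φinv (Φ x) = x) ∧ (∀ y ∈ V, Φ (Φinv y) = y)

/-- 𝒜-equivalence of the germ of `f1` at `p1` and the germ of `f2` at `p2`. -/
def AEquiv (f1 : R2 → R3) (p1 : R2) (f2 : R2 → R3) (p2 : R2) : Prop :=
  ∃ (Φ : R2 → R2) (Ψ : R3 → R3),
    IsLocalDiffeoAt Φ p1 ∧ Φ p1 = p2 ∧
    IsLocalDiffeoAt Ψ (f1 p1) ∧ Ψ (f1 p1) = f2 p2 ∧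
    ∀ᶠ x in nhds p1, Ψ (f1 x) = f2 (Φ x)

/-- The canonical unit normal of a generalized timelike minimal surface. -/
def gtmsNormal (g1 g2 : ℝ → ℝ) (p : R2) : R3 :=
  (Real.sqrt ((1 - g1 p.1 * g2 p.2) ^ 2 + 2 * (g1 p.1 + g2 p.2) ^ 2))⁻¹ •
    (g1 p.1 + g2 p.2, -g1 p.1 + g2 p.2, 1 + g1 p.1 * g2 p.2)

/-- The signed area density function `λ = det(f_u, f_v, n)`. -/
def areaDensity (f : R2 → R3) (g1 g2 : ℝ → ℝ) (p : R2) : ℝ :=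
  det3 (pu f p) (pv f p) (gtmsNormal g1 g2 p)

/-- `f` is a front at `p`: the Legendrian lift `(f, n)` is an immersion at `p`,
where `n` is the canonical unit normal. -/
def IsFrontAt (f : R2 → R3) (g1 g2 : ℝ → ℝ) (p : R2) : Prop :=
  Function.Injective (fderiv ℝ (fun q => (f q, gtmsNormal g1 g2 q)) p)

/-- The differential of `f` at `p` has rank one. -/
def RankOne (f : R2 → R3) (p : R2) : Prop :=
  LinearMap.rank (fderiv ℝ f p).toLinearMap = 1

/-- Directional derivative of `F` along the vector field `X`. -/
def vD (X : R2 → R2) (F : R2 → R3) : R2 → R3 := fun q => fderiv ℝ F q (X q)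

/-- `φ_i = g_i' / (g_i² ω_i)`. -/
def phiW (g w : ℝ → ℝ) : ℝ → ℝ := fun t => deriv g t / (g t ^ 2 * w t)
/-- `Φ_i = (g_i/g_i') φ_i'`. -/
def PhiW (g w : ℝ → ℝ) : ℝ → ℝ := fun t => g t / deriv g t * deriv (phiW g w) t

/-- standard cuspidal butterfly -/
def fCBF : R2 → R3 := fun q =>
  (q.1, 5 * q.2 ^ 4 + 2 * q.1 * q.2, 4 * q.2 ^ 5 + q.1 * q.2 ^ 2 - q.1 ^ 2)
/-- standard cuspidal S₁⁺ singularity -/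
def fCS1p : R2 → R3 := fun q => (q.1, q.2 ^ 2, q.2 ^ 3 * (q.1 ^ 2 + q.2 ^ 2))
/-- standard cuspidal S₁⁻ singularity -/
def fCS1m : R2 → R3 := fun q => (q.1, q.2 ^ 2, q.2 ^ 3 * (q.1 ^ 2 - q.2 ^ 2))
/-- standard cuspidal edge -/
def fCE : R2 → R3 := fun q => (q.1, q.2 ^ 2, q.2 ^ 3)
/-- standard (2,5)-cuspidal edge -/
def fCE25 : R2 → R3 := fun q => (q.1, q.2 ^ 2, q.2 ^ 5)
/-- standard cuspidal beaks -/
def fCBK : R2 → R3 := fun q =>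
  (q.2, q.1 ^ 3 - q.1 * q.2 ^ 2, 3 * q.1 ^ 4 - 2 * q.1 ^ 2 * q.2 ^ 2)
/-- standard cuspidal lips -/
def fCLP : R2 → R3 := fun q =>
  (q.2, q.1 ^ 3 + q.1 * q.2 ^ 2, 3 * q.1 ^ 4 + 2 * q.1 ^ 2 * q.2 ^ 2)
/-- standard D₄⁺ singularity -/
def fD4p : R2 → R3 := fun q =>
  (q.1 * q.2, q.1 ^ 2 + 3 * q.2 ^ 2, q.1 ^ 2 * q.2 + q.2 ^ 3)
/-- standard D₄⁻ singularity -/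
def fD4m : R2 → R3 := fun q =>
  (q.1 * q.2, q.1 ^ 2 - 3 * q.2 ^ 2, q.1 ^ 2 * q.2 - q.2 ^ 3)

/-!
Write the surface as a sum `A(u) + B(v)` of two null curves and suppose that its germ is a cuspidal
`S₁⁻` singularity. Parametrize both curves along the singular set `y = 0` of the normal form by the
same variable `x`. They then have the same null direction `nullVec (ρ x)`, with `ρ' ≠ 0`:
`A' = a • nullVec ρ` and `B' = b • nullVec ρ`. Expanding the normal form transversally to the
singular set shows that `b - a` is `x²` times a function without zeros, so `b - a` has a constant
sign, say `0 < a < b` for `x ≠ 0`.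

This makes `A(s) + B(t)` locally injective. The functional `nullPolar (ρ t) (ρ t')` has derivative
`a (ρ - ρ t) (ρ - ρ t')` along `A`, which is negative between `t` and `t'` only. So none of its
forward increments along `A` is as negative as its increment along `B` from `t` to `t'`, which
excludes `A(s) - A(s') = B(t') - B(t)` for `s' ≤ s` and `t < t'`. The normal form, however, takes
the same value at `(u, u)` and at `(u, -u)`.
-/

open scoped Topology

/-- The null vector `(-1 - r², 1 - r², 2r) / 2` of `𝕃³`; up to scale, every null direction but one
is of this form. -/
def nullVec (r : ℝ) : R3 := ((-1 - r ^ 2) / 2, (1 - r ^ 2) / 2, r)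

/-- The linear functional taking the value `(r - s) (r - t)` at `nullVec r`. For `s = t` it is
`-2 ⟨·, nullVec s⟩` with respect to the Lorentzian inner product. -/
def nullPolar (s t : ℝ) : R3 →L[ℝ] ℝ :=
  LinearMap.toContinuousLinearMap
    { toFun := fun x => -(x.1 + x.2.1) - (s + t) * x.2.2 + s * t * (x.2.1 - x.1)
      map_add' := fun x y => by simp only [Prod.fst_add, Prod.snd_add]; ring
      map_smul' := fun c x => by
        simp only [Prod.smul_fst, Prod.smul_snd, smul_eq_mul, RingHom.id_apply]; ring }

/-- The linear functional `x ↦ x₂ - x₁` for the coordinates `(x₁, x₂, x₃)` of `R3`, which normalizes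
`nullVec r`: it takes the value `1` there. -/
def nullHeight : R3 →L[ℝ] ℝ :=
  LinearMap.toContinuousLinearMap
    { toFun := fun x => x.2.1 - x.1
      map_add' := fun x y => by simp only [Prod.fst_add, Prod.snd_add]; ring
      map_smul' := fun c x => by
        simp only [Prod.smul_fst, Prod.smul_snd, smul_eq_mul, RingHom.id_apply]; ring }

/-- The linear functional taking the value `r - t` at `nullVec r`. -/
def nullSlope (t : ℝ) : R3 →L[ℝ] ℝ :=
  (ContinuousLinearMap.snd ℝ ℝ ℝ).comp (ContinuousLinearMap.snd ℝ ℝ (ℝ × ℝ)) - t • nullHeight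

lemma nullPolar_apply (s t : ℝ) (x : R3) :
    nullPolar s t x = -(x.1 + x.2.1) - (s + t) * x.2.2 + s * t * (x.2.1 - x.1) := rfl

lemma nullHeight_apply (x : R3) : nullHeight x = x.2.1 - x.1 := rfl

lemma nullSlope_apply (t : ℝ) (x : R3) : nullSlope t x = x.2.2 - t * (x.2.1 - x.1) := rfl

@[simp]
lemma nullPolar_nullVec (s t r : ℝ) : nullPolar s t (nullVec r) = (r - s) * (r - t) := by
  simp only [nullPolar_apply, nullVec]; ring

@[simp]
lemma nullHeight_nullVec (r : ℝ) : nullHeight (nullVec r) = 1 := by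
  simp only [nullHeight_apply, nullVec]; ring

@[simp]
lemma nullSlope_nullVec (t r : ℝ) : nullSlope t (nullVec r) = r - t := by
  simp only [nullSlope_apply, nullVec]; ring

section Continuity

variable {X : Type*} [TopologicalSpace X] {x₀ : X} {s t : X → ℝ} {v : X → R3}

lemma continuousAt_nullPolar (hs : ContinuousAt s x₀) (ht : ContinuousAt t x₀)
    (hv : ContinuousAt v x₀) : ContinuousAt (fun x => nullPolar (s x) (t x) (v x)) x₀ := by
  simp only [nullPolar_apply]
  fun_prop

lemma continuousAt_nullSlope (ht : ContinuousAt t x₀) (hv : ContinuousAt v x₀) :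
    ContinuousAt (fun x => nullSlope (t x) (v x)) x₀ := by
  simp only [nullSlope_apply]
  fun_prop

end Continuity

lemma eq_smul_nullVec {r : ℝ} {x : R3} (h₁ : nullSlope r x = 0) (h₂ : nullPolar r r x = 0) :
    x = nullHeight x • nullVec r := by
  rw [nullSlope_apply] at h₁
  rw [nullPolar_apply] at h₂
  refine Prod.ext ?_ (Prod.ext ?_ ?_) <;>
    simp only [nullHeight_apply, nullVec, Prod.smul_mk, smul_eq_mul]
  · linear_combination (-1 / 2) * h₂ - r * h₁
  · linear_combination (-1 / 2) * h₂ - r * h₁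
  · linear_combination h₁

lemma nullPolar_ne_zero (s t : ℝ) : nullPolar s t ≠ 0 := fun h => by
  obtain ⟨r, hr⟩ := ((Set.finite_singleton t).insert s).exists_notMem
  rw [Set.mem_insert_iff, Set.mem_singleton_iff, not_or] at hr
  have h0 : (r - s) * (r - t) = 0 := by rw [← nullPolar_nullVec, h, zero_apply]
  exact mul_ne_zero (sub_ne_zero.2 hr.1) (sub_ne_zero.2 hr.2) h0

lemma eq_and_eq_neg_of_smul_nullVec_add_smul_nullVec_eq_zero {k l r s : ℝ} (hk : k ≠ 0)
    (h : k • nullVec r + l • nullVec s = 0) : s = r ∧ l = -k := by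
  have h₁ : k + l = 0 := by simpa using congrArg nullHeight h
  have h₂ : k * (r - s) = 0 := by simpa using congrArg (nullSlope s) h
  exact ⟨(sub_eq_zero.1 ((mul_eq_zero.1 h₂).resolve_left hk)).symm, by linear_combination h₁⟩

section MonotoneBounds

variable {I : Set ℝ} {ρ : ℝ → ℝ}

lemma sub_mul_sub_neg_of_mem_Ioo (hρ : StrictMonoOn ρ I ∨ StrictAntiOn ρ I) {x t t' : ℝ}
    (hx : x ∈ I) (ht : t ∈ I) (ht' : t' ∈ I) (hxt : x ∈ Set.Ioo t t') :
    (ρ x - ρ t) * (ρ x - ρ t') < 0 := by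
  rcases hρ with h | h
  · exact mul_neg_of_pos_of_neg (sub_pos.2 (h ht hx hxt.1)) (sub_neg.2 (h hx ht' hxt.2))
  · exact mul_neg_of_neg_of_pos (sub_neg.2 (h ht hx hxt.1)) (sub_pos.2 (h hx ht' hxt.2))

lemma sub_mul_sub_nonneg_of_notMem_Ioo (hρ : MonotoneOn ρ I ∨ AntitoneOn ρ I) {x t t' : ℝ}
    (hx : x ∈ I) (ht : t ∈ I) (ht' : t' ∈ I) (htt' : t ≤ t') (hxt : x ∉ Set.Ioo t t') :
    0 ≤ (ρ x - ρ t) * (ρ x - ρ t') := by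
  rw [Set.mem_Ioo, not_and_or, not_lt, not_lt] at hxt
  rcases hxt with hxt | hxt <;> rcases hρ with h | h
  · exact mul_nonneg_of_nonpos_of_nonpos (sub_nonpos.2 (h hx ht hxt))
      (sub_nonpos.2 (h hx ht' (hxt.trans htt')))
  · exact mul_nonneg (sub_nonneg.2 (h hx ht hxt)) (sub_nonneg.2 (h hx ht' (hxt.trans htt')))
  · exact mul_nonneg (sub_nonneg.2 (h ht hx (htt'.trans hxt))) (sub_nonneg.2 (h ht' hx hxt))
  · exact mul_nonneg_of_nonpos_of_nonpos (sub_nonpos.2 (h ht hx (htt'.trans hxt)))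
      (sub_nonpos.2 (h ht' hx hxt))

lemma strictMonoOn_or_strictAntiOn_of_hasDerivWithinAt_ne_zero {ρ' : ℝ → ℝ} (hI : Convex ℝ I)
    (hρ : ∀ x ∈ I, HasDerivWithinAt ρ (ρ' x) I x) (hρ' : ∀ x ∈ I, ρ' x ≠ 0) :
    StrictMonoOn ρ I ∨ StrictAntiOn ρ I := by
  have hcont : ContinuousOn ρ I := fun x hx => (hρ x hx).continuousWithinAt
  have hint : ∀ x ∈ interior I, HasDerivWithinAt ρ (ρ' x) (interior I) x := fun x hx =>
    (hρ x (interior_subset hx)).mono interior_subset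
  rcases hasDerivWithinAt_forall_lt_or_forall_gt_of_forall_ne hI hρ hρ' with h | h
  · exact Or.inr (strictAntiOn_of_hasDerivWithinAt_neg hI hcont hint
      fun x hx => h x (interior_subset hx))
  · exact Or.inl (strictMonoOn_of_hasDerivWithinAt_pos hI hcont hint
      fun x hx => h x (interior_subset hx))

/-- If `α` decreases between `t` and `t'` and increases elsewhere, then no forward increment of `α`
is smaller than the one from `t` to `t'`. -/
lemma sub_le_sub_of_antitoneOn_Icc_of_monotoneOn {M : Type*} [AddCommGroup M] [PartialOrder M]
    [IsOrderedAddMonoid M] {α : ℝ → M} {s s' t t' : ℝ}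
    (hs : s ∈ I) (hs' : s' ∈ I) (ht : t ∈ I) (ht' : t' ∈ I) (hss' : s' ≤ s) (htt' : t ≤ t')
    (hmid : AntitoneOn α (Set.Icc t t')) (hleft : MonotoneOn α (I ∩ Set.Iic t))
    (hright : MonotoneOn α (I ∩ Set.Ici t')) : α t' - α t ≤ α s - α s' := by
  have hdecr : α t' ≤ α t := hmid (Set.left_mem_Icc.2 htt') (Set.right_mem_Icc.2 htt') htt'
  rcases le_total s t with hst | hts
  · exact (sub_nonpos.2 hdecr).trans
      (sub_nonneg.2 (hleft ⟨hs', hss'.trans hst⟩ ⟨hs, hst⟩ hss'))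
  rcases le_total t' s' with hts' | hst'
  · exact (sub_nonpos.2 hdecr).trans
      (sub_nonneg.2 (hright ⟨hs', hts'⟩ ⟨hs, hts'.trans hss'⟩ hss'))
  refine sub_le_sub ?_ ?_
  · rcases le_total s t' with h | h
    · exact hmid ⟨hts, h⟩ (Set.right_mem_Icc.2 htt') h
    · exact hright ⟨ht', Set.self_mem_Ici⟩ ⟨hs, h⟩ h
  · rcases le_total s' t with h | h
    · exact hleft ⟨hs', h⟩ ⟨ht, Set.self_mem_Iic⟩ h
    · exact hmid (Set.left_mem_Icc.2 htt') ⟨h, hst'⟩ h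

end MonotoneBounds

lemma lt_of_antitoneOn_of_hasDerivAt_neg {f : ℝ → ℝ} {a b x f' : ℝ}
    (hf : AntitoneOn f (Set.Icc a b)) (hx : x ∈ Set.Ioo a b) (hd : HasDerivAt f f' x)
    (hneg : f' < 0) : f b < f a := by
  have hab : a ≤ b := (hx.1.trans hx.2).le
  refine (hf (Set.left_mem_Icc.2 hab) (Set.right_mem_Icc.2 hab) hab).lt_of_ne fun heq => ?_
  have hconst : f =ᶠ[𝓝 x] fun _ => f a := by
    filter_upwards [Icc_mem_nhds hx.1 hx.2] with y hy
    exact le_antisymm (hf (Set.left_mem_Icc.2 hab) hy hy.1)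
      (heq ▸ hf hy (Set.right_mem_Icc.2 hab) hy.2)
  exact hneg.ne (hd.unique ((hasDerivAt_const x (f a)).congr_of_eventuallyEq hconst))

section NullCurves

variable {I : Set ℝ} {A B : ℝ → R3} {a b ρ : ℝ → ℝ}

lemma hasDerivAt_nullPolar_comp {x : ℝ} (s t : ℝ) (hA : HasDerivAt A (a x • nullVec (ρ x)) x) :
    HasDerivAt (fun x => nullPolar s t (A x)) (a x * ((ρ x - s) * (ρ x - t))) x :=
  ((nullPolar s t).hasFDerivAt.comp_hasDerivAt x hA).congr_deriv
    (by rw [map_smul, nullPolar_nullVec, smul_eq_mul])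

lemma strictMonoOn_nullHeight_comp (hI : Convex ℝ I)
    (hA : ∀ x ∈ I, HasDerivAt A (a x • nullVec (ρ x)) x) (ha : ∀ x ∈ I, 0 < a x) :
    StrictMonoOn (fun x => nullHeight (A x)) I := by
  have hd : ∀ x ∈ I, HasDerivAt (fun x => nullHeight (A x)) (a x) x := fun x hx =>
    (nullHeight.hasFDerivAt.comp_hasDerivAt x (hA x hx)).congr_deriv
      (by rw [map_smul, nullHeight_nullVec, smul_eq_mul, mul_one])
  exact strictMonoOn_of_hasDerivWithinAt_pos hI
    (fun x hx => (hd x hx).continuousAt.continuousWithinAt)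
    (fun x hx => (hd x (interior_subset hx)).hasDerivWithinAt)
    fun x hx => ha x (interior_subset hx)

variable {t t' : ℝ} {φ c : ℝ → ℝ}

lemma monotoneOn_of_hasDerivAt_mul_sub_mul_sub (hρ : MonotoneOn ρ I ∨ AntitoneOn ρ I)
    (ht : t ∈ I) (ht' : t' ∈ I) (htt' : t ≤ t') {J : Set ℝ} (hJ : Convex ℝ J) (hJI : J ⊆ I)
    (hdisj : Disjoint J (Set.Ioo t t')) (hc : ∀ x ∈ J, 0 ≤ c x)
    (hφ : ∀ x ∈ J, HasDerivAt φ (c x * ((ρ x - ρ t) * (ρ x - ρ t'))) x) : MonotoneOn φ J :=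
  monotoneOn_of_hasDerivWithinAt_nonneg hJ (fun x hx => (hφ x hx).continuousAt.continuousWithinAt)
    (fun x hx => (hφ x (interior_subset hx)).hasDerivWithinAt)
    fun x hx =>
      have hxJ : x ∈ J := interior_subset hx
      mul_nonneg (hc x hxJ) (sub_mul_sub_nonneg_of_notMem_Ioo hρ (hJI hxJ) ht ht' htt'
        (Set.disjoint_left.1 hdisj hxJ))

lemma antitoneOn_Icc_of_hasDerivAt_mul_sub_mul_sub (hρ : StrictMonoOn ρ I ∨ StrictAntiOn ρ I)
    (ht : t ∈ I) (ht' : t' ∈ I) (hI : Set.Icc t t' ⊆ I) (hc : ∀ x ∈ I, 0 ≤ c x)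
    (hφ : ∀ x ∈ I, HasDerivAt φ (c x * ((ρ x - ρ t) * (ρ x - ρ t'))) x) :
    AntitoneOn φ (Set.Icc t t') := by
  refine antitoneOn_of_hasDerivWithinAt_nonpos (convex_Icc t t')
    (fun x hx => (hφ x (hI hx)).continuousAt.continuousWithinAt)
    (fun x hx => (hφ x (hI (interior_subset hx))).hasDerivWithinAt) fun x hx => ?_
  have hxI : x ∈ I := hI (interior_subset hx)
  rw [interior_Icc] at hx
  exact mul_nonpos_of_nonneg_of_nonpos (hc x hxI) (sub_mul_sub_neg_of_mem_Ioo hρ hxI ht ht' hx).le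

/-- The functional `nullPolar (ρ t) (ρ t')` has derivative `a (ρ - ρ t) (ρ - ρ t')` along `A`, so it
decreases between `t` and `t'` only, and there more slowly than along `B`. -/
lemma sub_ne_sub_of_null_of_lt (hI : Convex ℝ I) (hρ : StrictMonoOn ρ I ∨ StrictAntiOn ρ I)
    (hA : ∀ x ∈ I, HasDerivAt A (a x • nullVec (ρ x)) x)
    (hB : ∀ x ∈ I, HasDerivAt B (b x • nullVec (ρ x)) x)
    (ha : ∀ x ∈ I, 0 ≤ a x) (hab : ∀ x ∈ I, a x ≤ b x) (hab' : ∀ x ∈ I, x ≠ 0 → a x < b x)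
    {s s' : ℝ} (hs : s ∈ I) (hs' : s' ∈ I) (ht : t ∈ I) (ht' : t' ∈ I) (hss' : s' ≤ s)
    (htt' : t < t') : A s - A s' ≠ B t' - B t := fun heq => by
  have hρ' : MonotoneOn ρ I ∨ AntitoneOn ρ I :=
    hρ.imp StrictMonoOn.monotoneOn StrictAntiOn.antitoneOn
  have hIcc : Set.Icc t t' ⊆ I := hI.ordConnected.out ht ht'
  set α : ℝ → ℝ := fun x => nullPolar (ρ t) (ρ t') (A x)
  set β : ℝ → ℝ := fun x => nullPolar (ρ t) (ρ t') (B x)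
  have hα : ∀ x ∈ I, HasDerivAt α (a x * ((ρ x - ρ t) * (ρ x - ρ t'))) x := fun x hx =>
    hasDerivAt_nullPolar_comp _ _ (hA x hx)
  have hβα : ∀ x ∈ I, HasDerivAt (β - α) ((b x - a x) * ((ρ x - ρ t) * (ρ x - ρ t'))) x :=
    fun x hx => ((hasDerivAt_nullPolar_comp _ _ (hB x hx)).sub (hα x hx)).congr_deriv
      (sub_mul _ _ _).symm
  have hmono : ∀ K, Convex ℝ K → Disjoint K (Set.Ioo t t') → MonotoneOn α (I ∩ K) :=
    fun K hK hd => monotoneOn_of_hasDerivAt_mul_sub_mul_sub hρ' ht ht' htt'.le (hI.inter hK)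
      Set.inter_subset_left (hd.mono_left Set.inter_subset_right) (fun x hx => ha x hx.1)
      fun x hx => hα x hx.1
  have hle : α t' - α t ≤ α s - α s' :=
    sub_le_sub_of_antitoneOn_Icc_of_monotoneOn hs hs' ht ht' hss' htt'.le
      (antitoneOn_Icc_of_hasDerivAt_mul_sub_mul_sub hρ ht ht' hIcc ha hα)
      (hmono _ (convex_Iic t) (Set.disjoint_left.2 fun x hx hx' => hx'.1.not_ge hx))
      (hmono _ (convex_Ici t') (Set.disjoint_left.2 fun x hx hx' => hx'.2.not_ge hx))
  have hlt : (β - α) t' < (β - α) t := by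
    obtain ⟨x, hx, hx0⟩ : ∃ x ∈ Set.Ioo t t', x ≠ 0 :=
      ((Set.Ioo_infinite htt').sdiff (Set.finite_singleton 0)).nonempty
    have hxI : x ∈ I := hIcc (Set.Ioo_subset_Icc_self hx)
    exact lt_of_antitoneOn_of_hasDerivAt_neg (antitoneOn_Icc_of_hasDerivAt_mul_sub_mul_sub hρ ht ht'
      hIcc (fun x hx => sub_nonneg.2 (hab x hx)) hβα) hx (hβα x hxI)
      (mul_neg_of_pos_of_neg (sub_pos.2 (hab' x hxI hx0))
        (sub_mul_sub_neg_of_mem_Ioo hρ hxI ht ht' hx))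
  have hαβ : α s - α s' = β t' - β t := by simp only [α, β, ← map_sub, heq]
  simp only [Pi.sub_apply] at hlt
  linarith

lemma injOn_add_of_null_of_lt (hI : Convex ℝ I) (hρ : StrictMonoOn ρ I ∨ StrictAntiOn ρ I)
    (hA : ∀ x ∈ I, HasDerivAt A (a x • nullVec (ρ x)) x)
    (hB : ∀ x ∈ I, HasDerivAt B (b x • nullVec (ρ x)) x)
    (ha : ∀ x ∈ I, 0 < a x) (hab : ∀ x ∈ I, a x ≤ b x) (hab' : ∀ x ∈ I, x ≠ 0 → a x < b x) :
    Set.InjOn (fun q : R2 => A q.1 + B q.2) (I ×ˢ I) := by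
  have hAmono := strictMonoOn_nullHeight_comp hI hA ha
  have hBmono := strictMonoOn_nullHeight_comp hI hB fun x hx => (ha x hx).trans_le (hab x hx)
  have hnot_lt : ∀ {s t s' t'}, s ∈ I → t ∈ I → s' ∈ I → t' ∈ I →
      A s + B t = A s' + B t' → ¬ t < t' := fun {s t s' t'} hs ht hs' ht' heq htt' => by
    have hsub : A s - A s' = B t' - B t := sub_eq_sub_iff_add_eq_add.2 (by rw [heq, add_comm])
    have hheight := congrArg nullHeight hsub
    have hBlt : nullHeight (B t) < nullHeight (B t') := hBmono ht ht' htt'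
    rw [map_sub, map_sub] at hheight
    exact sub_ne_sub_of_null_of_lt hI hρ hA hB (fun x hx => (ha x hx).le) hab hab' hs hs' ht ht'
      ((hAmono.le_iff_le hs' hs).1 (by linarith)) htt' hsub
  rintro ⟨s, t⟩ ⟨hs, ht⟩ ⟨s', t'⟩ ⟨hs', ht'⟩ heq
  have htt' : t = t' := le_antisymm (not_lt.1 (hnot_lt hs' ht' hs ht heq.symm))
    (not_lt.1 (hnot_lt hs ht hs' ht' heq))
  subst htt'
  exact Prod.ext (hAmono.injOn hs hs' (congrArg nullHeight (add_right_cancel heq))) rfl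

variable {ρ' h : ℝ → ℝ}

lemma exists_injOn_add_of_null_of_pos
    (hA : ∀ᶠ x in 𝓝 0, HasDerivAt A (a x • nullVec (ρ x)) x)
    (hB : ∀ᶠ x in 𝓝 0, HasDerivAt B (b x • nullVec (ρ x)) x)
    (hρ : ∀ᶠ x in 𝓝 0, HasDerivAt ρ (ρ' x) x) (hρ' : ∀ᶠ x in 𝓝 0, ρ' x ≠ 0)
    (ha : ∀ᶠ x in 𝓝 0, 0 < a x) (hh : ∀ᶠ x in 𝓝 0, 0 < h x)
    (hab : ∀ᶠ x in 𝓝 0, b x - a x = x ^ 2 * h x) :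
    ∃ I ∈ 𝓝 (0 : ℝ), Set.InjOn (fun q : R2 => A q.1 + B q.2) (I ×ˢ I) := by
  obtain ⟨ε, hε, H⟩ := Metric.eventually_nhds_iff_ball.1
    (hA.and (hB.and (hρ.and (hρ'.and (ha.and (hh.and hab))))))
  choose hA hB hρ hρ' ha hh hab using H
  refine ⟨Metric.ball 0 ε, Metric.ball_mem_nhds 0 hε, injOn_add_of_null_of_lt (convex_ball 0 ε)
    (strictMonoOn_or_strictAntiOn_of_hasDerivWithinAt_ne_zero (convex_ball 0 ε)
      (fun x hx => (hρ x hx).hasDerivWithinAt) hρ') hA hB ha (fun x hx => ?_) fun x hx hx0 => ?_⟩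
  · exact sub_nonneg.1 (hab x hx ▸ mul_nonneg (sq_nonneg x) (hh x hx).le)
  · exact sub_pos.1 (hab x hx ▸ mul_pos (sq_pos_of_ne_zero hx0) (hh x hx))

lemma exists_injOn_add_of_null
    (hA : ∀ᶠ x in 𝓝 0, HasDerivAt A (a x • nullVec (ρ x)) x)
    (hB : ∀ᶠ x in 𝓝 0, HasDerivAt B (b x • nullVec (ρ x)) x)
    (hρ : ∀ᶠ x in 𝓝 0, HasDerivAt ρ (ρ' x) x) (hρ' : ∀ᶠ x in 𝓝 0, ρ' x ≠ 0)
    (ha : ContinuousAt a 0) (ha0 : a 0 ≠ 0) (hh : ContinuousAt h 0) (hh0 : h 0 ≠ 0)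
    (hab : ∀ᶠ x in 𝓝 0, b x - a x = x ^ 2 * h x) :
    ∃ I ∈ 𝓝 (0 : ℝ), Set.InjOn (fun q : R2 => A q.1 + B q.2) (I ×ˢ I) := by
  wlog hapos : 0 < a 0 generalizing A B a b h
  · obtain ⟨I, hI, hinj⟩ := this (A := -A) (B := -B) (a := -a) (b := -b) (h := -h)
      (hA.mono fun x hx => hx.neg.congr_deriv (neg_smul _ _).symm)
      (hB.mono fun x hx => hx.neg.congr_deriv (neg_smul _ _).symm) ha.neg (neg_ne_zero.2 ha0)
      hh.neg (neg_ne_zero.2 hh0)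
      (hab.mono fun x hx => by simp only [Pi.neg_apply]; linear_combination -hx)
      (neg_pos.2 (ha0.lt_of_le (not_lt.1 hapos)))
    exact ⟨I, hI, fun q hq q' hq' heq => hinj hq hq' (by
      simpa only [Pi.neg_apply, ← neg_add, neg_inj] using heq)⟩
  wlog hhpos : 0 < h 0 generalizing A B a b h
  · have hab' : b =ᶠ[𝓝 0] fun x => a x + x ^ 2 * h x :=
      hab.mono fun x hx => by linear_combination hx
    have hb0 : b 0 = a 0 := by simpa using hab'.self_of_nhds
    obtain ⟨I, hI, hinj⟩ := this (A := B) (B := A) (a := b) (b := a) (h := -h) hB hA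
      ((ha.add ((continuousAt_id.pow 2).mul hh)).congr hab'.symm) (hb0 ▸ ha0) hh.neg
      (neg_ne_zero.2 hh0)
      (hab.mono fun x hx => by simp only [Pi.neg_apply]; linear_combination -hx)
      (hb0 ▸ hapos) (neg_pos.2 (hh0.lt_of_le (not_lt.1 hhpos)))
    exact ⟨I, hI, fun q hq q' hq' heq => Prod.swap_injective
      (hinj hq.symm hq'.symm (by simpa only [Prod.fst_swap, Prod.snd_swap, add_comm] using heq))⟩
  exact exists_injOn_add_of_null_of_pos hA hB hρ hρ' (ha.eventually_const_lt hapos)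
    (hh.eventually_const_lt hhpos) hab

end NullCurves

section CuspExpansion

variable {l₁ l₂ r₁ r₂ : ℝ → ℝ} {P Q : ℝ → R3}

lemma tendsto_mul_sub_pow_div_pow {l r : ℝ → ℝ} {d : ℝ} (hl : ContinuousAt l 0)
    (hr : HasDerivAt r d 0) (n : ℕ) :
    Tendsto (fun y => l y * (r y - r 0) ^ n / y ^ n) (𝓝[≠] 0) (𝓝 (l 0 * d ^ n)) := by
  refine ((hl.tendsto.mono_left nhdsWithin_le_nhds).mul (hr.tendsto_slope.pow n)).congr fun y => ?_
  rw [slope_def_field, sub_zero, div_pow, mul_div_assoc]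

lemma tendsto_map_null_add_null_div_pow {n : ℕ} {ρ d₁ d₂ : ℝ} (L : R3 →L[ℝ] ℝ)
    (hL : ∀ r, L (nullVec r) = (r - ρ) ^ n)
    (hl₁ : ContinuousAt l₁ 0) (hl₂ : ContinuousAt l₂ 0) (hr₁ : HasDerivAt r₁ d₁ 0)
    (hr₂ : HasDerivAt r₂ d₂ 0) (h₁ : r₁ 0 = ρ) (h₂ : r₂ 0 = ρ) :
    Tendsto (fun y => L (l₁ y • nullVec (r₁ y) + l₂ y • nullVec (r₂ y)) / y ^ n) (𝓝[≠] 0)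
      (𝓝 (l₁ 0 * d₁ ^ n + l₂ 0 * d₂ ^ n)) := by
  refine ((tendsto_mul_sub_pow_div_pow hl₁ hr₁ n).add
    (tendsto_mul_sub_pow_div_pow hl₂ hr₂ n)).congr fun y => ?_
  rw [map_add, map_smul, map_smul, hL, hL, h₁, h₂, smul_eq_mul, smul_eq_mul, add_div]

lemma tendsto_map_smul_add_sq_smul_div (L : R3 →L[ℝ] ℝ) (hP : ContinuousAt P 0)
    (hQ : ContinuousAt Q 0) :
    Tendsto (fun y : ℝ => L (y • P y + y ^ 2 • Q y) / y) (𝓝[≠] 0) (𝓝 (L (P 0))) := by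
  have hcont : ContinuousAt (fun y : ℝ => L (P y + y • Q y)) 0 :=
    L.continuous.continuousAt.comp (hP.add (continuousAt_id.smul hQ))
  have hlim := hcont.tendsto.mono_left (nhdsWithin_le_nhds (s := {0}ᶜ))
  rw [zero_smul, add_zero] at hlim
  refine hlim.congr' (eventually_mem_nhdsWithin.mono fun y (hy : y ≠ 0) => ?_)
  have hfactor : y • P y + y ^ 2 • Q y = y • (P y + y • Q y) := by rw [smul_add, smul_smul, sq]
  simp only [hfactor, map_smul, smul_eq_mul, mul_div_cancel_left₀ _ hy]

lemma tendsto_map_smul_add_sq_smul_div_sq (L : R3 →L[ℝ] ℝ) (hL : L (P 0) = 0)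
    (hP : HasDerivAt P 0 0) (hQ : ContinuousAt Q 0) :
    Tendsto (fun y : ℝ => L (y • P y + y ^ 2 • Q y) / y ^ 2) (𝓝[≠] 0) (𝓝 (L (Q 0))) := by
  have hLP : HasDerivAt (fun y => L (P y)) 0 0 :=
    (L.hasFDerivAt.comp_hasDerivAt 0 hP).congr_deriv (map_zero L)
  have hLQ := (L.continuous.continuousAt.comp hQ).tendsto.mono_left
    (nhdsWithin_le_nhds (s := {0}ᶜ))
  have hlim := hLP.tendsto_slope.add hLQ
  rw [zero_add] at hlim
  refine hlim.congr' (eventually_mem_nhdsWithin.mono fun y (hy : y ≠ 0) => ?_)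
  simp only [slope_def_field, Function.comp_apply, hL, sub_zero, map_add, map_smul, smul_eq_mul]
  field_simp

/-- The common kernel of `nullSlope (r₁ 0)` and `nullPolar (r₁ 0) (r₁ 0)` is the common null line at
`y = 0`; the two functionals pick out the terms of order one and two in `y`. -/
lemma null_cusp_expansion {κ₁ κ₂ : ℝ} (hl₁ : ContinuousAt l₁ 0) (hl₂ : ContinuousAt l₂ 0)
    (hr₁ : HasDerivAt r₁ (κ₁ * l₁ 0) 0) (hr₂ : HasDerivAt r₂ (κ₂ * l₂ 0) 0)
    (hP : HasDerivAt P 0 0) (hQ : ContinuousAt Q 0) (h0 : l₁ 0 ≠ 0)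
    (heq : ∀ᶠ y in 𝓝 0,
      l₁ y • nullVec (r₁ y) + l₂ y • nullVec (r₂ y) = y • P y + y ^ 2 • Q y) :
    r₂ 0 = r₁ 0 ∧ nullPolar (r₁ 0) (r₁ 0) (P 0) = 0 ∧
      l₁ 0 ^ 2 * (κ₁ + κ₂) = nullSlope (r₁ 0) (P 0) ∧
      l₁ 0 * (κ₁ - κ₂) * nullSlope (r₁ 0) (P 0) = nullPolar (r₁ 0) (r₁ 0) (Q 0) := by
  obtain ⟨hr, hl⟩ := eq_and_eq_neg_of_smul_nullVec_add_smul_nullVec_eq_zero h0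
    (by simpa using heq.self_of_nhds)
  rw [hl] at hr₂
  have heq' := heq.filter_mono (nhdsWithin_le_nhds (s := {0}ᶜ))
  have hslope := tendsto_nhds_unique
    ((tendsto_map_null_add_null_div_pow (n := 1) (nullSlope (r₁ 0)) (fun r => by simp) hl₁ hl₂
      hr₁ hr₂ rfl hr).congr' (heq'.mono fun y hy => by rw [hy, pow_one]))
    (tendsto_map_smul_add_sq_smul_div _ hP.continuousAt hQ)
  have hlim := (tendsto_map_null_add_null_div_pow (n := 2) (nullPolar (r₁ 0) (r₁ 0))
    (fun r => by rw [nullPolar_nullVec, sq]) hl₁ hl₂ hr₁ hr₂ rfl hr).congr'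
    (heq'.mono fun y hy => by rw [hy])
  have hpolarP : nullPolar (r₁ 0) (r₁ 0) (P 0) = 0 := by
    have hid : Tendsto (fun y : ℝ => y) (𝓝[≠] 0) (𝓝 0) := tendsto_id.mono_left nhdsWithin_le_nhds
    have hzero := hid.mul hlim
    rw [zero_mul] at hzero
    refine tendsto_nhds_unique (tendsto_map_smul_add_sq_smul_div _ hP.continuousAt hQ)
      (hzero.congr' (eventually_mem_nhdsWithin.mono fun y (hy : y ≠ 0) => ?_))
    field_simp
  have hpolar := tendsto_nhds_unique hlim (tendsto_map_smul_add_sq_smul_div_sq _ hpolarP hP hQ)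
  refine ⟨hr, hpolarP, ?_, ?_⟩
  · rw [← hslope, hl]; ring
  · rw [← hslope, ← hpolar, hl]; ring

end CuspExpansion

section CuspidalS1Minus

lemma contDiff_fCS1m : ContDiff ℝ (⊤ : ℕ∞) fCS1m := by
  unfold fCS1m
  fun_prop

lemma fCS1m_zero : fCS1m 0 = 0 := by
  simp [fCS1m]

lemma fderiv_fCS1m (z e : R2) : fderiv ℝ fCS1m z e =
    (e.1, 2 * z.2 * e.2,
      2 * z.1 * z.2 ^ 3 * e.1 + (3 * z.1 ^ 2 * z.2 ^ 2 - 5 * z.2 ^ 4) * e.2) := by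
  have h₁ : HasFDerivAt (fun q : R2 => q.1) (ContinuousLinearMap.fst ℝ ℝ ℝ) z := hasFDerivAt_fst
  have h₂ : HasFDerivAt (fun q : R2 => q.2) (ContinuousLinearMap.snd ℝ ℝ ℝ) z := hasFDerivAt_snd
  have h : HasFDerivAt fCS1m _ z :=
    h₁.prodMk ((h₂.pow 2).prodMk ((h₂.pow 3).mul ((h₁.pow 2).sub (h₂.pow 2))))
  rw [h.fderiv]
  ext <;> simp
  ring

lemma not_injective_fderiv_fCS1m : ¬ Function.Injective (fderiv ℝ fCS1m 0) := fun h => by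
  have h0 : ((0, 1) : R2) = 0 := h (by simp [fderiv_fCS1m])
  simpa using congrArg Prod.snd h0

lemma not_injOn_fCS1m {U : Set R2} (hU : U ∈ 𝓝 0) : ¬ Set.InjOn fCS1m U := fun h => by
  have hdiag : Tendsto (fun u : ℝ => ((u, u) : R2)) (𝓝[≠] 0) (𝓝 0) :=
    ((continuous_id.prodMk continuous_id).tendsto' (0 : ℝ) (0 : R2) rfl).mono_left
      nhdsWithin_le_nhds
  have hanti : Tendsto (fun u : ℝ => ((u, -u) : R2)) (𝓝[≠] 0) (𝓝 0) :=
    ((continuous_id.prodMk continuous_neg).tendsto' (0 : ℝ) (0 : R2) (by simp)).mono_left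
      nhdsWithin_le_nhds
  obtain ⟨u, hu, hu', hu0 : u ≠ 0⟩ :=
    ((hdiag.eventually hU).and ((hanti.eventually hU).and eventually_mem_nhdsWithin)).exists
  have huv : ((u, u) : R2) = (u, -u) := h hu hu' (by simp [fCS1m])
  exact hu0 (self_eq_neg.1 (congrArg Prod.snd huv))

end CuspidalS1Minus

/-- Near the origin, `θ` is a continuous `1`-form and `dρ = κ θ`. This is the pull-back to the plane
of a null curve with velocity `w u • nullVec (r u)`: then `θ`, `ρ` and `κ` are the pull-backs of the
form `w du` and of the functions `r` and `r' / w`. -/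
structure IsNullForm (θ : R2 → R2 →L[ℝ] ℝ) (ρ κ : R2 → ℝ) : Prop where
  eventually_continuousAt : ∀ᶠ z in 𝓝 0, ContinuousAt θ z
  continuousAt_coeff : ContinuousAt κ 0
  eventually_hasFDerivAt : ∀ᶠ z in 𝓝 0, HasFDerivAt ρ (κ z • θ z) z

/-- The germ at the origin of a sum of two pulled-back null curves, with independent forms `θ₁` and
`θ₂`, which the coordinate change `T` of the target brings to the cuspidal `S₁⁻` normal form. -/
structure IsNullCuspS1 (T : R3 → R3) (θ₁ : R2 → R2 →L[ℝ] ℝ) (ρ₁ κ₁ : R2 → ℝ)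
    (θ₂ : R2 → R2 →L[ℝ] ℝ) (ρ₂ κ₂ : R2 → ℝ) : Prop where
  left : IsNullForm θ₁ ρ₁ κ₁
  right : IsNullForm θ₂ ρ₂ κ₂
  independent : ∀ e, θ₁ 0 e = 0 → θ₂ 0 e = 0 → e = 0
  contDiffAt : ContDiffAt ℝ 2 T 0
  injective_fderiv : Function.Injective (fderiv ℝ T 0)
  eventually_hasFDerivAt : ∀ᶠ z in 𝓝 0, HasFDerivAt (T ∘ fCS1m)
    ((θ₁ z).smulRight (nullVec (ρ₁ z)) + (θ₂ z).smulRight (nullVec (ρ₂ z))) z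

lemma tendsto_axis : Tendsto (fun x : ℝ => ((x, 0) : R2)) (𝓝 0) (𝓝 0) :=
  (by fun_prop : Continuous fun x : ℝ => ((x, 0) : R2)).tendsto' 0 0 rfl

lemma hasDerivAt_axis (x : ℝ) : HasDerivAt (fun x : ℝ => ((x, 0) : R2)) (1, 0) x :=
  (hasDerivAt_id x).prodMk (hasDerivAt_const x 0)

lemma hasDerivAt_transversal (x y : ℝ) : HasDerivAt (fun y : ℝ => ((x, y) : R2)) (0, 1) y :=
  (hasDerivAt_const y x).prodMk (hasDerivAt_id y)

namespace IsNullForm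

variable {θ : R2 → R2 →L[ℝ] ℝ} {ρ κ : R2 → ℝ}

lemma eventually_hasDerivAt_axis (h : IsNullForm θ ρ κ) :
    ∀ᶠ x : ℝ in 𝓝 0, HasDerivAt (fun x => ρ (x, 0)) (κ (x, 0) * θ (x, 0) (1, 0)) x :=
  (tendsto_axis.eventually h.eventually_hasFDerivAt).mono fun x hx =>
    HasFDerivAt.comp_hasDerivAt (f := fun x : ℝ => ((x, 0) : R2)) x hx (hasDerivAt_axis x)

lemma continuousAt_axis (h : IsNullForm θ ρ κ) (e : R2) :
    ContinuousAt (fun x : ℝ => θ (x, 0) e) 0 :=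
  (ContinuousAt.comp (f := fun x : ℝ => ((x, 0) : R2)) h.eventually_continuousAt.self_of_nhds
    tendsto_axis).clm_apply continuousAt_const

lemma continuousAt_coeff_axis (h : IsNullForm θ ρ κ) : ContinuousAt (fun x : ℝ => κ (x, 0)) 0 :=
  ContinuousAt.comp (f := fun x : ℝ => ((x, 0) : R2)) h.continuousAt_coeff tendsto_axis

end IsNullForm

namespace IsNullCuspS1

variable {T : R3 → R3} {θ₁ θ₂ : R2 → R2 →L[ℝ] ℝ} {ρ₁ κ₁ ρ₂ κ₂ : R2 → ℝ}

lemma hasDerivAt_fderiv_transversal {x : ℝ} (hT : ContDiffAt ℝ 2 T (fCS1m (x, 0))) :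
    HasDerivAt (fun y : ℝ => fderiv ℝ T (fCS1m (x, y))) 0 0 := by
  have hcusp : HasDerivAt (fun y : ℝ => fCS1m (x, y)) 0 0 :=
    ((contDiff_fCS1m.differentiable (by simp) (x, 0)).hasFDerivAt.comp_hasDerivAt (0 : ℝ)
      (hasDerivAt_transversal x 0)).congr_deriv (by rw [fderiv_fCS1m]; simp)
  have hfderiv := ((hT.fderiv_right (m := 1) (by norm_num)).differentiableAt (by simp)).hasFDerivAt
  exact (hfderiv.comp_hasDerivAt (0 : ℝ) hcusp).congr_deriv (map_zero _)

lemma eventually_contDiffAt (h : IsNullCuspS1 T θ₁ ρ₁ κ₁ θ₂ ρ₂ κ₂) :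
    ∀ᶠ z in 𝓝 0, ContDiffAt ℝ 2 T (fCS1m z) :=
  (contDiff_fCS1m.continuous.tendsto' 0 0 fCS1m_zero).eventually
    (h.contDiffAt.eventually (by simp))

lemma eventually_add_eq_fderiv (h : IsNullCuspS1 T θ₁ ρ₁ κ₁ θ₂ ρ₂ κ₂) : ∀ᶠ z in 𝓝 0, ∀ e,
    θ₁ z e • nullVec (ρ₁ z) + θ₂ z e • nullVec (ρ₂ z) =
      fderiv ℝ T (fCS1m z) (fderiv ℝ fCS1m z e) := by
  filter_upwards [h.eventually_hasFDerivAt, h.eventually_contDiffAt] with z hz hT e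
  have hcomp := (hT.differentiableAt (by simp)).hasFDerivAt.comp z
    (contDiff_fCS1m.differentiable (by simp) z).hasFDerivAt
  exact DFunLike.congr_fun (hz.unique hcomp) e

lemma add_eq_fderiv_zero (h : IsNullCuspS1 T θ₁ ρ₁ κ₁ θ₂ ρ₂ κ₂) (e : R2) :
    θ₁ 0 e • nullVec (ρ₁ 0) + θ₂ 0 e • nullVec (ρ₂ 0) = fderiv ℝ T 0 (e.1, 0, 0) := by
  rw [h.eventually_add_eq_fderiv.self_of_nhds e, fCS1m_zero, fderiv_fCS1m]
  simp

lemma left_transversal_ne_zero (h : IsNullCuspS1 T θ₁ ρ₁ κ₁ θ₂ ρ₂ κ₂) : θ₁ 0 (0, 1) ≠ 0 := by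
  intro h₁
  have hsum := h.add_eq_fderiv_zero (0, 1)
  rw [h₁, zero_smul, zero_add] at hsum
  have h₂ : θ₂ 0 (0, 1) = 0 := by simpa [Prod.mk_zero_zero] using congrArg nullHeight hsum
  simpa using congrArg Prod.snd (h.independent _ h₁ h₂)

/-- `null_cusp_expansion` applied along the lines transversal to the singular curve, where the
differential of `fCS1m` maps `∂/∂y` to `(0, 2y, (3x² - 5y²) y²)`. -/
lemma eventually_axis (h : IsNullCuspS1 T θ₁ ρ₁ κ₁ θ₂ ρ₂ κ₂) : ∀ᶠ x : ℝ in 𝓝 0,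
    let ρ := ρ₁ (x, 0)
    let D := fderiv ℝ T (fCS1m (x, 0))
    ρ₂ (x, 0) = ρ ∧ nullPolar ρ ρ (D (0, 1, 0)) = 0 ∧
    θ₁ (x, 0) (0, 1) ^ 2 * (κ₁ (x, 0) + κ₂ (x, 0)) = 2 * nullSlope ρ (D (0, 1, 0)) ∧
    θ₁ (x, 0) (0, 1) * (κ₁ (x, 0) - κ₂ (x, 0)) * (2 * nullSlope ρ (D (0, 1, 0))) =
      3 * x ^ 2 * nullPolar ρ ρ (D (0, 0, 1)) := by
  filter_upwards [tendsto_axis.eventually h.eventually_add_eq_fderiv.eventually_nhds,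
    tendsto_axis.eventually h.eventually_contDiffAt,
    tendsto_axis.eventually h.left.eventually_continuousAt,
    tendsto_axis.eventually h.right.eventually_continuousAt,
    tendsto_axis.eventually h.left.eventually_hasFDerivAt,
    tendsto_axis.eventually h.right.eventually_hasFDerivAt,
    (h.left.continuousAt_axis (0, 1)).eventually_ne h.left_transversal_ne_zero]
    with x heq hT hθ₁ hθ₂ hρ₁ hρ₂ hne
  have hline : ContinuousAt (fun y : ℝ => ((x, y) : R2)) 0 :=
    (hasDerivAt_transversal x 0).continuousAt
  have hD := hasDerivAt_fderiv_transversal hT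
  have hP : HasDerivAt (fun y => (2 : ℝ) • fderiv ℝ T (fCS1m (x, y)) (0, 1, 0)) 0 0 :=
    ((hD.clm_apply (hasDerivAt_const 0 ((0, 1, 0) : R3))).const_smul (2 : ℝ)).congr_deriv (by simp)
  have hexp := null_cusp_expansion
    (l₁ := fun y => θ₁ (x, y) (0, 1)) (l₂ := fun y => θ₂ (x, y) (0, 1))
    (r₁ := fun y => ρ₁ (x, y)) (r₂ := fun y => ρ₂ (x, y))
    (Q := fun y => (3 * x ^ 2 - 5 * y ^ 2) • fderiv ℝ T (fCS1m (x, y)) (0, 0, 1))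
    ((ContinuousAt.comp (f := fun y : ℝ => ((x, y) : R2)) hθ₁ hline).clm_apply continuousAt_const)
    ((ContinuousAt.comp (f := fun y : ℝ => ((x, y) : R2)) hθ₂ hline).clm_apply continuousAt_const)
    (hρ₁.comp_hasDerivAt 0 (hasDerivAt_transversal x 0))
    (hρ₂.comp_hasDerivAt 0 (hasDerivAt_transversal x 0))
    hP
    ((by fun_prop : ContinuousAt (fun y : ℝ => 3 * x ^ 2 - 5 * y ^ 2) 0).smul
      (hD.continuousAt.clm_apply continuousAt_const)) hne ?_
  · simpa using hexp
  · filter_upwards [hline.eventually heq] with y hy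
    rw [hy, fderiv_fCS1m, smul_smul, smul_smul, ← map_smul, ← map_smul, ← map_add]
    congr 1
    ext <;> simp <;> ring

lemma null_eq (h : IsNullCuspS1 T θ₁ ρ₁ κ₁ θ₂ ρ₂ κ₂) : ρ₂ 0 = ρ₁ 0 :=
  h.eventually_axis.self_of_nhds.1

lemma fderiv_fst_eq (h : IsNullCuspS1 T θ₁ ρ₁ κ₁ θ₂ ρ₂ κ₂) :
    fderiv ℝ T 0 (1, 0, 0) = (θ₁ 0 (1, 0) + θ₂ 0 (1, 0)) • nullVec (ρ₁ 0) := by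
  rw [← h.add_eq_fderiv_zero (1, 0), h.null_eq, add_smul]

lemma eventually_coeff_mul_eq (h : IsNullCuspS1 T θ₁ ρ₁ κ₁ θ₂ ρ₂ κ₂) : ∀ᶠ x : ℝ in 𝓝 0,
    κ₁ (x, 0) * θ₁ (x, 0) (1, 0) = κ₂ (x, 0) * θ₂ (x, 0) (1, 0) := by
  filter_upwards [h.eventually_axis.eventually_nhds, h.left.eventually_hasDerivAt_axis,
    h.right.eventually_hasDerivAt_axis] with x hx h₁ h₂
  exact h₁.unique (h₂.congr_of_eventuallyEq (hx.mono fun y hy => hy.1.symm))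

/-- Otherwise `fderiv ℝ T 0` would map the first two basis vectors to parallel null vectors. -/
lemma nullSlope_fderiv_ne_zero (h : IsNullCuspS1 T θ₁ ρ₁ κ₁ θ₂ ρ₂ κ₂) :
    nullSlope (ρ₁ 0) (fderiv ℝ T 0 (0, 1, 0)) ≠ 0 := fun hslope => by
  have hpolar := h.eventually_axis.self_of_nhds.2.1
  simp only [Prod.mk_zero_zero, fCS1m_zero] at hpolar
  set k : ℝ := θ₁ 0 (1, 0) + θ₂ 0 (1, 0)
  set c : ℝ := nullHeight (fderiv ℝ T 0 (0, 1, 0))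
  have hsnd : fderiv ℝ T 0 (0, 1, 0) = c • nullVec (ρ₁ 0) := eq_smul_nullVec hslope hpolar
  have hparallel : c • ((1, 0, 0) : R3) = k • (0, 1, 0) := h.injective_fderiv <| by
    rw [map_smul, map_smul, h.fderiv_fst_eq, hsnd, smul_comm]
  have hk : k = 0 := by simpa using (congrArg (fun x : R3 => x.2.1) hparallel).symm
  have hfst : ((1, 0, 0) : R3) = 0 := h.injective_fderiv <| by
    rw [h.fderiv_fst_eq, map_zero]
    exact (congrArg (· • nullVec (ρ₁ 0)) hk).trans (zero_smul ℝ _)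
  simpa using congrArg Prod.fst hfst

/-- Otherwise `nullPolar (ρ₁ 0) (ρ₁ 0)` would vanish on the whole range of `fderiv ℝ T 0`. -/
lemma nullPolar_fderiv_ne_zero (h : IsNullCuspS1 T θ₁ ρ₁ κ₁ θ₂ ρ₂ κ₂) :
    nullPolar (ρ₁ 0) (ρ₁ 0) (fderiv ℝ T 0 (0, 0, 1)) ≠ 0 := fun hthird => by
  have hsecond := h.eventually_axis.self_of_nhds.2.1
  simp only [Prod.mk_zero_zero, fCS1m_zero] at hsecond
  have hfirst : nullPolar (ρ₁ 0) (ρ₁ 0) (fderiv ℝ T 0 (1, 0, 0)) = 0 := by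
    rw [h.fderiv_fst_eq]
    simp
  have hsurj : Function.Surjective (fderiv ℝ T 0) :=
    (LinearMap.injective_iff_surjective (f := (fderiv ℝ T 0).toLinearMap)).1 h.injective_fderiv
  refine nullPolar_ne_zero (ρ₁ 0) (ρ₁ 0) (ContinuousLinearMap.ext fun y => ?_)
  obtain ⟨⟨a, b, c⟩, rfl⟩ := hsurj y
  have hbasis : ((a, b, c) : R3) = a • (1, 0, 0) + b • (0, 1, 0) + c • (0, 0, 1) := by ext <;> simp
  rw [hbasis]
  simp only [map_add, map_smul, hfirst, hsecond, hthird, smul_zero, add_zero, zero_apply]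

lemma coeff_eq (h : IsNullCuspS1 T θ₁ ρ₁ κ₁ θ₂ ρ₂ κ₂) : κ₁ 0 = κ₂ 0 := by
  have hcusp := h.eventually_axis.self_of_nhds.2.2.2
  simp only [Prod.mk_zero_zero, fCS1m_zero] at hcusp
  rw [sq, zero_mul, mul_zero, zero_mul] at hcusp
  have hsub : κ₁ 0 - κ₂ 0 = 0 := by
    simpa [h.left_transversal_ne_zero, h.nullSlope_fderiv_ne_zero] using hcusp
  exact sub_eq_zero.1 hsub

lemma left_coeff_ne_zero (h : IsNullCuspS1 T θ₁ ρ₁ κ₁ θ₂ ρ₂ κ₂) : κ₁ 0 ≠ 0 := fun h0 => by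
  have hfold := h.eventually_axis.self_of_nhds.2.2.1
  simp only [Prod.mk_zero_zero, fCS1m_zero, ← h.coeff_eq, h0] at hfold
  exact h.nullSlope_fderiv_ne_zero (by linarith)

lemma right_coeff_ne_zero (h : IsNullCuspS1 T θ₁ ρ₁ κ₁ θ₂ ρ₂ κ₂) : κ₂ 0 ≠ 0 :=
  h.coeff_eq ▸ h.left_coeff_ne_zero

lemma right_axis_eq_left_axis (h : IsNullCuspS1 T θ₁ ρ₁ κ₁ θ₂ ρ₂ κ₂) :
    θ₂ 0 (1, 0) = θ₁ 0 (1, 0) := by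
  have heq : κ₁ 0 * θ₁ 0 (1, 0) = κ₂ 0 * θ₂ 0 (1, 0) := h.eventually_coeff_mul_eq.self_of_nhds
  rw [← h.coeff_eq] at heq
  exact (mul_left_cancel₀ h.left_coeff_ne_zero heq).symm

lemma left_axis_ne_zero (h : IsNullCuspS1 T θ₁ ρ₁ κ₁ θ₂ ρ₂ κ₂) : θ₁ 0 (1, 0) ≠ 0 := fun h0 => by
  have hfst : ((1, 0, 0) : R3) = 0 := h.injective_fderiv <| by
    rw [h.fderiv_fst_eq, h.right_axis_eq_left_axis, h0, add_zero, zero_smul, map_zero]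
  simpa using congrArg Prod.fst hfst

lemma right_axis_ne_zero (h : IsNullCuspS1 T θ₁ ρ₁ κ₁ θ₂ ρ₂ κ₂) : θ₂ 0 (1, 0) ≠ 0 :=
  h.right_axis_eq_left_axis ▸ h.left_axis_ne_zero

lemma continuousAt_fderiv_axis (h : IsNullCuspS1 T θ₁ ρ₁ κ₁ θ₂ ρ₂ κ₂) (e : R3) :
    ContinuousAt (fun x : ℝ => fderiv ℝ T (fCS1m (x, 0)) e) 0 := by
  have hT : ContinuousAt (fderiv ℝ T) (fCS1m 0) :=
    fCS1m_zero ▸ h.contDiffAt.continuousAt_fderiv (by simp)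
  have hcusp : Tendsto (fun x : ℝ => fCS1m (x, 0)) (𝓝 0) (𝓝 (fCS1m 0)) :=
    contDiff_fCS1m.continuous.continuousAt.tendsto.comp tendsto_axis
  exact (ContinuousAt.comp (f := fun x : ℝ => fCS1m (x, 0)) hT hcusp).clm_apply continuousAt_const

/-- Both densities are compared through `eventually_coeff_mul_eq`, and `κ₁ - κ₂` vanishes to exactly
second order along the singular curve. -/
lemma exists_axis_sub_eq_sq_mul (h : IsNullCuspS1 T θ₁ ρ₁ κ₁ θ₂ ρ₂ κ₂) :
    ∃ q : ℝ → ℝ, ContinuousAt q 0 ∧ q 0 ≠ 0 ∧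
      ∀ᶠ x : ℝ in 𝓝 0, θ₂ (x, 0) (1, 0) - θ₁ (x, 0) (1, 0) = x ^ 2 * q x := by
  set D : ℝ → R3 →L[ℝ] R3 := fun x => fderiv ℝ T (fCS1m (x, 0)) with hDdef
  have hD0 : D 0 = fderiv ℝ T 0 := by rw [hDdef, ← fCS1m_zero]; rfl
  set num : ℝ → ℝ := fun x =>
    3 * θ₁ (x, 0) (1, 0) * nullPolar (ρ₁ (x, 0)) (ρ₁ (x, 0)) (D x (0, 0, 1))
  set den : ℝ → ℝ := fun x =>
    κ₂ (x, 0) * (θ₁ (x, 0) (0, 1) * (2 * nullSlope (ρ₁ (x, 0)) (D x (0, 1, 0))))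
  have hρ : ContinuousAt (fun x : ℝ => ρ₁ (x, 0)) 0 :=
    h.left.eventually_hasDerivAt_axis.self_of_nhds.continuousAt
  have hnum : ContinuousAt num 0 :=
    (continuousAt_const.mul (h.left.continuousAt_axis (1, 0))).mul
      (continuousAt_nullPolar hρ hρ (h.continuousAt_fderiv_axis (0, 0, 1)))
  have hden : ContinuousAt den 0 :=
    h.right.continuousAt_coeff_axis.mul ((h.left.continuousAt_axis (0, 1)).mul
      (continuousAt_const.mul (continuousAt_nullSlope hρ (h.continuousAt_fderiv_axis (0, 1, 0)))))
  have hnum0 : num 0 ≠ 0 := mul_ne_zero (mul_ne_zero three_ne_zero h.left_axis_ne_zero)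
    (hD0 ▸ h.nullPolar_fderiv_ne_zero)
  have hden0 : den 0 ≠ 0 := mul_ne_zero h.right_coeff_ne_zero (mul_ne_zero
    h.left_transversal_ne_zero (mul_ne_zero two_ne_zero (hD0 ▸ h.nullSlope_fderiv_ne_zero)))
  refine ⟨fun x => num x / den x, hnum.div hden hden0, div_ne_zero hnum0 hden0, ?_⟩
  filter_upwards [h.eventually_axis, h.eventually_coeff_mul_eq, hden.eventually_ne hden0]
    with x hx hcoeff hden
  obtain ⟨-, -, -, hcusp⟩ := hx
  rw [← mul_div_assoc, eq_div_iff hden]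
  linear_combination (θ₁ (x, 0) (1, 0)) * hcusp - (θ₁ (x, 0) (0, 1) *
    (2 * nullSlope (ρ₁ (x, 0)) (D x (0, 1, 0)))) * hcoeff

lemma exists_injOn_add (h : IsNullCuspS1 T θ₁ ρ₁ κ₁ θ₂ ρ₂ κ₂) {A B : ℝ → R3}
    (hA : ∀ᶠ x : ℝ in 𝓝 0, HasDerivAt A (θ₁ (x, 0) (1, 0) • nullVec (ρ₁ (x, 0))) x)
    (hB : ∀ᶠ x : ℝ in 𝓝 0, HasDerivAt B (θ₂ (x, 0) (1, 0) • nullVec (ρ₂ (x, 0))) x) :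
    ∃ I ∈ 𝓝 (0 : ℝ), Set.InjOn (fun q : R2 => A q.1 + B q.2) (I ×ˢ I) := by
  obtain ⟨q, hq, hq0, hsub⟩ := h.exists_axis_sub_eq_sq_mul
  refine exists_injOn_add_of_null hA ?_ h.left.eventually_hasDerivAt_axis ?_
    (h.left.continuousAt_axis (1, 0)) h.left_axis_ne_zero hq hq0 hsub
  · filter_upwards [hB, h.eventually_axis] with x hx hρ
    rwa [← hρ.1]
  · exact (h.left.continuousAt_coeff_axis.mul (h.left.continuousAt_axis (1, 0))).eventually_ne
      (mul_ne_zero h.left_coeff_ne_zero h.left_axis_ne_zero)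

end IsNullCuspS1

lemma IsNullForm.of_comp {σ : R2 → ℝ} {w r : ℝ → ℝ} (hσ : ContDiffAt ℝ 2 σ 0) (hw : Continuous w)
    (hw0 : w (σ 0) ≠ 0) (hr : ContDiffAt ℝ 1 r (σ 0)) :
    IsNullForm (fun z => w (σ z) • fderiv ℝ σ z) (fun z => r (σ z))
      (fun z => deriv r (σ z) / w (σ z)) where
  eventually_continuousAt := by
    filter_upwards [hσ.eventually (by simp)] with z hz
    exact (hw.continuousAt.comp hz.continuousAt).smul (hz.continuousAt_fderiv (by simp))
  continuousAt_coeff :=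
    ((hr.derivWithin (m := 0) le_rfl).continuousAt.comp hσ.continuousAt).div
      (hw.continuousAt.comp hσ.continuousAt) hw0
  eventually_hasFDerivAt := by
    filter_upwards [hσ.eventually (by simp), hσ.continuousAt.eventually (hr.eventually (by simp)),
      (hw.continuousAt.comp hσ.continuousAt).eventually_ne hw0]
      with z hz hrz (hwz : w (σ z) ≠ 0)
    have hcoeff : (deriv r (σ z) / w (σ z)) • w (σ z) • fderiv ℝ σ z =
        deriv r (σ z) • fderiv ℝ σ z := by rw [smul_smul, div_mul_cancel₀ _ hwz]
    rw [hcoeff]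
    exact (hrz.differentiableAt one_ne_zero).hasDerivAt.comp_hasFDerivAt z
      (hz.differentiableAt two_ne_zero).hasFDerivAt

lemma image_axis_mem_nhds {σ : R2 → ℝ} (hσ : ContDiffAt ℝ 1 σ 0) (hσ' : fderiv ℝ σ 0 (1, 0) ≠ 0)
    {I : Set ℝ} (hI : I ∈ 𝓝 0) : (fun x : ℝ => σ (x, 0)) '' I ∈ 𝓝 (σ 0) := by
  have haxis : HasStrictDerivAt (fun x : ℝ => ((x, 0) : R2)) (1, 0) 0 :=
    (hasStrictDerivAt_id 0).prodMk (hasStrictDerivAt_const 0 0)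
  have hderiv : HasStrictDerivAt (fun x : ℝ => σ (x, 0)) (fderiv ℝ σ 0 (1, 0)) 0 :=
    HasStrictFDerivAt.comp_hasStrictDerivAt 0 (hσ.hasStrictFDerivAt one_ne_zero) haxis
  have hmap := hderiv.map_nhds_eq hσ'
  rw [Prod.mk_zero_zero] at hmap
  rw [← hmap]
  exact image_mem_map hI

namespace IsLocalDiffeoAt

variable {E F : Type*} [NormedAddCommGroup E] [NormedSpace ℝ E] [NormedAddCommGroup F]
  [NormedSpace ℝ F] {Φ : E → F} {p : E}

lemma contDiffAt (h : IsLocalDiffeoAt Φ p) : ContDiffAt ℝ (⊤ : ℕ∞) Φ p := by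
  obtain ⟨U, V, Φinv, hU, hpU, -, -, hΦ, -⟩ := h
  exact hΦ.contDiffAt (hU.mem_nhds hpU)

lemma exists_symm (h : IsLocalDiffeoAt Φ p) : ∃ Φinv : F → E, IsLocalDiffeoAt Φinv (Φ p) ∧
    (∀ᶠ x in 𝓝 p, Φinv (Φ x) = x) ∧ ∀ᶠ y in 𝓝 (Φ p), Φ (Φinv y) = y := by
  obtain ⟨U, V, Φinv, hU, hpU, hV, hpV, hΦ, hΦinv, hUV, hVU, hleft, hright⟩ := h
  refine ⟨Φinv, ⟨V, U, Φ, hV, hpV, hU, ?_, hΦinv, hΦ, hVU, hUV, hright, hleft⟩, ?_, ?_⟩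
  · rwa [hleft p hpU]
  · filter_upwards [hU.mem_nhds hpU] using hleft
  · filter_upwards [hV.mem_nhds hpV] using hright

lemma injective_fderiv (h : IsLocalDiffeoAt Φ p) : Function.Injective (fderiv ℝ Φ p) := by
  obtain ⟨Φinv, hΦinv, hleft, -⟩ := h.exists_symm
  have hcomp := (hΦinv.contDiffAt.differentiableAt (by simp)).hasFDerivAt.comp p
    (h.contDiffAt.differentiableAt (by simp)).hasFDerivAt
  have hid := hcomp.unique ((hasFDerivAt_id p).congr_of_eventuallyEq hleft)
  exact Function.LeftInverse.injective fun e => DFunLike.congr_fun hid e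

lemma exists_injOn (h : IsLocalDiffeoAt Φ p) : ∃ U ∈ 𝓝 p, Set.InjOn Φ U := by
  obtain ⟨Φinv, -, hleft, -⟩ := h.exists_symm
  exact ⟨_, hleft, Set.LeftInvOn.injOn fun x hx => hx⟩

end IsLocalDiffeoAt

namespace AEquiv

variable {f₁ f₂ : R2 → R3} {p₁ p₂ : R2}

lemma symm (h : AEquiv f₁ p₁ f₂ p₂) (hf₁ : ContinuousAt f₁ p₁) : AEquiv f₂ p₂ f₁ p₁ := by
  obtain ⟨Φ, Ψ, hΦ, rfl, hΨ, hΨp, heq⟩ := h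
  obtain ⟨Φinv, hΦinv, hΦleft, hΦright⟩ := hΦ.exists_symm
  obtain ⟨Ψinv, hΨinv, hΨleft, -⟩ := hΨ.exists_symm
  have hp : Φinv (Φ p₁) = p₁ := hΦleft.self_of_nhds
  have hlim : Tendsto Φinv (𝓝 (Φ p₁)) (𝓝 p₁) := by
    simpa only [hp] using hΦinv.contDiffAt.continuousAt.tendsto
  rw [hΨp] at hΨinv
  refine ⟨Φinv, Ψinv, hΦinv, hp, hΨinv, hΨp ▸ hΨleft.self_of_nhds, ?_⟩
  filter_upwards [hΦright, hlim.eventually heq, hlim.eventually (hf₁.eventually hΨleft)]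
    with y hy hfy hΨy
  rw [← hΨy, hfy, hy]

lemma exists_injOn (h : AEquiv f₁ p₁ f₂ p₂) {V : Set R2} (hV : V ∈ 𝓝 p₂) (hf₂ : Set.InjOn f₂ V) :
    ∃ U ∈ 𝓝 p₁, Set.InjOn f₁ U := by
  obtain ⟨Φ, Ψ, hΦ, rfl, -, -, heq⟩ := h
  obtain ⟨U, hU, hinj⟩ := hΦ.exists_injOn
  refine ⟨_, inter_mem hU (inter_mem (hΦ.contDiffAt.continuousAt hV) heq), ?_⟩
  rintro x ⟨hxU, hxV, hx : Ψ (f₁ x) = f₂ (Φ x)⟩ y ⟨hyU, hyV, hy : Ψ (f₁ y) = f₂ (Φ y)⟩ hxy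
  exact hinj hxU hyU (hf₂ hxV hyV (by rw [← hx, hxy, hy]))

lemma injective_fderiv (h : AEquiv f₁ p₁ f₂ p₂) (hf₁ : DifferentiableAt ℝ f₁ p₁)
    (hf₂ : DifferentiableAt ℝ f₂ p₂) (hinj : Function.Injective (fderiv ℝ f₂ p₂)) :
    Function.Injective (fderiv ℝ f₁ p₁) := by
  obtain ⟨Φ, Ψ, hΦ, rfl, hΨ, -, heq⟩ := h
  have hleft := (hΨ.contDiffAt.differentiableAt (by simp)).hasFDerivAt.comp p₁ hf₁.hasFDerivAt
  have hright := hf₂.hasFDerivAt.comp p₁ (hΦ.contDiffAt.differentiableAt (by simp)).hasFDerivAt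
  have hcomp := hleft.unique (hright.congr_of_eventuallyEq heq)
  refine Function.Injective.of_comp (f := fderiv ℝ Ψ (f₁ p₁)) ?_
  rw [← ContinuousLinearMap.coe_comp, hcomp, ContinuousLinearMap.coe_comp]
  exact hinj.comp hΦ.injective_fderiv

end AEquiv

lemma fderiv_eq_smul_pu_add_smul_pv (f : R2 → R3) (p e : R2) :
    fderiv ℝ f p e = e.1 • pu f p + e.2 • pv f p := by
  have he : e = e.1 • ((1, 0) : R2) + e.2 • (0, 1) := by ext <;> simp
  conv_lhs => rw [he]
  rw [map_add, map_smul, map_smul, pu, pv]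

namespace IsGTMS

variable {f : R2 → R3} {g1 g2 w1 w2 : ℝ → ℝ}

lemma differentiable (hf : IsGTMS f g1 g2 w1 w2) : Differentiable ℝ f :=
  hf.smooth_f.differentiable (by simp)

lemma hasDerivAt_fst (hf : IsGTMS f g1 g2 w1 w2) (u v : ℝ) :
    HasDerivAt (fun u => f (u, v)) (pu f (u, v)) u :=
  (hf.differentiable (u, v)).hasFDerivAt.comp_hasDerivAt u
    ((hasDerivAt_id u).prodMk (hasDerivAt_const u v))

lemma hasDerivAt_snd (hf : IsGTMS f g1 g2 w1 w2) (u v : ℝ) :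
    HasDerivAt (fun v => f (u, v)) (pv f (u, v)) v :=
  (hf.differentiable (u, v)).hasFDerivAt.comp_hasDerivAt v
    ((hasDerivAt_const v u).prodMk (hasDerivAt_id v))

lemma eq_add (hf : IsGTMS f g1 g2 w1 w2) (u v u₀ v₀ : ℝ) :
    f (u, v) = f (u, v₀) + (f (u₀, v) - f (u₀, v₀)) := by
  have hd : ∀ x, HasDerivAt (fun x => f (x, v) - f (x, v₀)) 0 x := fun x =>
    ((hf.hasDerivAt_fst x v).sub (hf.hasDerivAt_fst x v₀)).congr_deriv
      (by rw [hf.deriv_u, hf.deriv_u, sub_self])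
  have hconst : f (u, v) - f (u, v₀) = f (u₀, v) - f (u₀, v₀) :=
    is_const_of_deriv_eq_zero (fun x => (hd x).differentiableAt) (fun x => (hd x).deriv) u u₀
  rw [← hconst, add_sub_cancel]

lemma pu_eq (hf : IsGTMS f g1 g2 w1 w2) (p : R2) : pu f p = w1 p.1 • nullVec (g1 p.1) := by
  rw [hf.deriv_u]
  ext <;> simp [nullVec] <;> ring

lemma pv_eq (hf : IsGTMS f g1 g2 w1 w2) {p : R2} (hg : g2 p.2 ≠ 0) :
    pv f p = (-w2 p.2 * g2 p.2 ^ 2) • nullVec (g2 p.2)⁻¹ := by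
  rw [hf.deriv_v]
  ext <;> simp [nullVec] <;> field_simp <;> ring

lemma gauss_mul_eq_one (hf : IsGTMS f g1 g2 w1 w2) {p : R2} (hw1 : w1 p.1 ≠ 0) (hw2 : w2 p.2 ≠ 0)
    (hsing : ¬ Function.Injective (fderiv ℝ f p)) : g1 p.1 * g2 p.2 = 1 := by
  rw [injective_iff_map_eq_zero] at hsing
  push Not at hsing
  obtain ⟨e, hker, he⟩ := hsing
  rw [fderiv_eq_smul_pu_add_smul_pv, hf.deriv_u, hf.deriv_v] at hker
  simp only [Prod.smul_mk, Prod.mk_add_mk, smul_eq_mul, Prod.mk_eq_zero] at hker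
  obtain ⟨ht, hx, hy⟩ := hker
  by_contra hg
  have hg' : 1 - g1 p.1 * g2 p.2 ≠ 0 := sub_ne_zero.2 (Ne.symm hg)
  have h₁ : e.1 * w1 p.1 * (1 - g1 p.1 * g2 p.2) = 0 := by linear_combination hx - ht - g2 p.2 * hy
  have h₂ : e.2 * w2 p.2 * (1 - g1 p.1 * g2 p.2) = 0 := by linear_combination ht + hx + g1 p.1 * hy
  exact he (Prod.ext (by simpa [hw1, hg'] using h₁) (by simpa [hw2, hg'] using h₂))

lemma hasFDerivAt_comp (hf : IsGTMS f g1 g2 w1 w2) {S : R2 → R2} {z : R2}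
    (hS : DifferentiableAt ℝ S z) (hg : g2 (S z).2 ≠ 0) : HasFDerivAt (fun z => f (S z))
      ((w1 (S z).1 • fderiv ℝ (fun z => (S z).1) z).smulRight (nullVec (g1 (S z).1)) +
        ((-w2 (S z).2 * g2 (S z).2 ^ 2) • fderiv ℝ (fun z => (S z).2) z).smulRight
          (nullVec (g2 (S z).2)⁻¹)) z := by
  refine ((hf.differentiable _).hasFDerivAt.comp z hS.hasFDerivAt).congr_fderiv
    (ContinuousLinearMap.ext fun e => ?_)
  rw [hS.hasFDerivAt.fst.fderiv, hS.hasFDerivAt.snd.fderiv, ContinuousLinearMap.comp_apply,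
    fderiv_eq_smul_pu_add_smul_pv, hf.pu_eq, hf.pv_eq hg]
  simp [smul_smul, mul_comm, mul_assoc]

lemma isNullCuspS1 (hf : IsGTMS f g1 g2 w1 w2) {S : R2 → R2} {T : R3 → R3}
    (hS : IsLocalDiffeoAt S 0) (hT : IsLocalDiffeoAt T 0)
    (heq : ∀ᶠ z in 𝓝 0, T (fCS1m z) = f (S z))
    (hw1 : w1 (S 0).1 ≠ 0) (hw2 : w2 (S 0).2 ≠ 0) (hg : g2 (S 0).2 ≠ 0) :
    IsNullCuspS1 T
      (fun z => w1 (S z).1 • fderiv ℝ (fun z => (S z).1) z)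
      (fun z => g1 (S z).1) (fun z => deriv g1 (S z).1 / w1 (S z).1)
      (fun z => (-w2 (S z).2 * g2 (S z).2 ^ 2) • fderiv ℝ (fun z => (S z).2) z)
      (fun z => (g2 (S z).2)⁻¹)
      (fun z => deriv (fun v => (g2 v)⁻¹) (S z).2 / (-w2 (S z).2 * g2 (S z).2 ^ 2)) := by
  have two_le : (2 : WithTop ℕ∞) ≤ ((⊤ : ℕ∞) : WithTop ℕ∞) :=
    WithTop.coe_le_coe.2 (le_top : (2 : ℕ∞) ≤ ⊤)
  have hS₂ : ContDiffAt ℝ 2 S 0 := hS.contDiffAt.of_le two_le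
  have hS0 : HasFDerivAt S (fderiv ℝ S 0) 0 := (hS₂.differentiableAt two_ne_zero).hasFDerivAt
  have hw2' : -w2 (S 0).2 * g2 (S 0).2 ^ 2 ≠ 0 := mul_ne_zero (neg_ne_zero.2 hw2) (pow_ne_zero 2 hg)
  refine
    { left := .of_comp hS₂.fst hf.smooth_w1.continuous hw1
        (hf.smooth_g1.contDiffAt.of_le (by exact_mod_cast le_top))
      right := .of_comp (w := fun v => -w2 v * g2 v ^ 2) (r := fun v => (g2 v)⁻¹) hS₂.snd
        (hf.smooth_w2.continuous.neg.mul (hf.smooth_g2.continuous.pow 2)) hw2'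
        ((hf.smooth_g2.contDiffAt.inv hg).of_le (by exact_mod_cast le_top))
      independent := fun e h₁ h₂ => ?_
      contDiffAt := hT.contDiffAt.of_le two_le
      injective_fderiv := hT.injective_fderiv
      eventually_hasFDerivAt := ?_ }
  · rw [hS0.fst.fderiv] at h₁
    rw [hS0.snd.fderiv] at h₂
    exact (map_eq_zero_iff _ hS.injective_fderiv).1
      (Prod.ext (by simpa [hw1] using h₁) (by simpa [hw2, hg] using h₂))
  · filter_upwards [heq.eventually_nhds, hS₂.eventually (by simp),
      hS₂.continuousAt.snd.eventually (hf.smooth_g2.continuous.continuousAt.eventually_ne hg)]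
      with z hz hSz hgz
    exact (hf.hasFDerivAt_comp (hSz.differentiableAt two_ne_zero) hgz).congr_of_eventuallyEq hz

lemma hasDerivAt_axis_left (hf : IsGTMS f g1 g2 w1 w2) {σ : R2 → ℝ} {x : ℝ}
    (hσ : DifferentiableAt ℝ σ (x, 0)) (v : ℝ) : HasDerivAt (fun x => f (σ (x, 0), v))
      ((w1 (σ (x, 0)) • fderiv ℝ σ (x, 0)) (1, 0) • nullVec (g1 (σ (x, 0)))) x := by
  have haxis : HasDerivAt (fun x : ℝ => σ (x, 0)) (fderiv ℝ σ (x, 0) (1, 0)) x :=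
    hσ.hasFDerivAt.comp_hasDerivAt x (hasDerivAt_axis x)
  refine ((hf.hasDerivAt_fst (σ (x, 0)) v).scomp x haxis).congr_deriv ?_
  rw [hf.pu_eq, smul_smul, smul_apply, smul_eq_mul, mul_comm]

lemma hasDerivAt_axis_right (hf : IsGTMS f g1 g2 w1 w2) {σ : R2 → ℝ} {x : ℝ}
    (hσ : DifferentiableAt ℝ σ (x, 0)) (hg : g2 (σ (x, 0)) ≠ 0) (u : ℝ) :
    HasDerivAt (fun x => f (u, σ (x, 0)))
      (((-w2 (σ (x, 0)) * g2 (σ (x, 0)) ^ 2) • fderiv ℝ σ (x, 0)) (1, 0) •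
        nullVec (g2 (σ (x, 0)))⁻¹) x := by
  have haxis : HasDerivAt (fun x : ℝ => σ (x, 0)) (fderiv ℝ σ (x, 0) (1, 0)) x :=
    hσ.hasFDerivAt.comp_hasDerivAt x (hasDerivAt_axis x)
  refine ((hf.hasDerivAt_snd u (σ (x, 0))).scomp x haxis).congr_deriv ?_
  rw [hf.pv_eq hg, smul_smul, smul_apply, smul_eq_mul, mul_comm]

/-- The surface is a sum of two null curves; up to a local reparametrization of each, these are the
restrictions to the axis of the two curves pulled back to the source of the normal form. -/
lemma exists_injOn_of_aequiv_fCS1m (hf : IsGTMS f g1 g2 w1 w2) {p : R2} (hw1 : w1 p.1 ≠ 0)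
    (hw2 : w2 p.2 ≠ 0) (h : AEquiv fCS1m 0 f p) : ∃ V ∈ 𝓝 p, Set.InjOn f V := by
  have hg : g2 p.2 ≠ 0 := right_ne_zero_of_mul_eq_one <| hf.gauss_mul_eq_one hw1 hw2 fun hinj =>
    not_injective_fderiv_fCS1m <| h.injective_fderiv
      (contDiff_fCS1m.differentiable (by simp) 0) (hf.differentiable p) hinj
  obtain ⟨S, T, hS, rfl, hT, -, heq⟩ := h
  rw [fCS1m_zero] at hT
  have hcusp := hf.isNullCuspS1 hS hT heq hw1 hw2 hg
  have hS₁ : ContDiffAt ℝ 1 S 0 := hS.contDiffAt.of_le (by exact_mod_cast le_top)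
  have hdiff : ∀ᶠ x : ℝ in 𝓝 0, DifferentiableAt ℝ S (x, 0) :=
    tendsto_axis.eventually ((hS₁.eventually (by simp)).mono fun z hz =>
      hz.differentiableAt one_ne_zero)
  have hg' : ∀ᶠ x : ℝ in 𝓝 0, g2 (S (x, 0)).2 ≠ 0 := tendsto_axis.eventually
    (hS₁.continuousAt.snd.eventually (hf.smooth_g2.continuous.continuousAt.eventually_ne hg))
  obtain ⟨I, hI, hinj⟩ := hcusp.exists_injOn_add
    (B := fun x => f ((S 0).1, (S (x, 0)).2) - f (S 0))
    (hdiff.mono fun x hx => hf.hasDerivAt_axis_left hx.fst (S 0).2)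
    (hdiff.mp (hg'.mono fun x hgx hx => (hf.hasDerivAt_axis_right hx.snd hgx (S 0).1).sub_const _))
  have himage₁ : (fun x : ℝ => (S (x, 0)).1) '' I ∈ 𝓝 (S 0).1 :=
    image_axis_mem_nhds hS₁.fst (fun h0 => hcusp.left_axis_ne_zero <| by
      rw [smul_apply, h0, smul_zero]) hI
  have himage₂ : (fun x : ℝ => (S (x, 0)).2) '' I ∈ 𝓝 (S 0).2 :=
    image_axis_mem_nhds hS₁.snd (fun h0 => hcusp.right_axis_ne_zero <| by
      rw [smul_apply, h0, smul_zero]) hI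
  have hV := prod_mem_nhds himage₁ himage₂
  rw [← Set.prodMap_image_prod] at hV
  exact ⟨_, hV, Set.InjOn.image_of_comp (hinj.congr fun q _ =>
    (hf.eq_add (S (q.1, 0)).1 (S (q.2, 0)).2 (S 0).1 (S 0).2).symm)⟩

end IsGTMS

theorem no_cuspidal_S1_minus_on_minface_general {f : R2 → R3} {g1 g2 w1 w2 : ℝ → ℝ}
    (hf : IsGTMS f g1 g2 w1 w2) {p : R2} (hw1 : w1 p.1 ≠ 0) (hw2 : w2 p.2 ≠ 0) :
    ¬ AEquiv f p fCS1m (0, 0) := fun h => by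
  have hsymm : AEquiv fCS1m 0 f p := h.symm hf.smooth_f.continuous.continuousAt
  obtain ⟨V, hV, hinj⟩ := hf.exists_injOn_of_aequiv_fCS1m hw1 hw2 hsymm
  obtain ⟨U, hU, hinjU⟩ := hsymm.exists_injOn hV hinj
  exact not_injOn_fCS1m hU hinjU

/-- there is no cuspidal S₁⁻ singularity on any minface. -/
theorem no_cuspidal_S1_minus_on_minface
    (f : R2 → R3) (g1 g2 w1 w2 : ℝ → ℝ) (hf : IsGTMS f g1 g2 w1 w2)
    (hw1 : ∀ u, w1 u ≠ 0) (hw2 : ∀ v, w2 v ≠ 0) :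
    ∀ p : R2, ¬ AEquiv f p fCS1m (0, 0) :=
  fun _ => no_cuspidal_S1_minus_on_minface_general hf (hw1 _) (hw2 _)
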